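/- arXiv:2005.05917 — 4 statements merged into one kernel-verified Lean document; each statement's English description precedes it below -/
import Mathlib

section
/- Let 0 < α < 1, let ν, P ∈ ℝ, let a < b be reals and let ψ : [a,b] → ℝ be continuously differentiable, strictly increasing with ψ' > 0. Define u(r,t) = 1 − r² + (P − 4ν) · (ψ(t) − ψ(a))^α / Γ(α+1). Then u(r,a) = 1 − r² for all r, and for every r ≠ 0 and every t ∈ (a,b], the ψ-Caputo derivative in time of u satisfies (ᶜD^{α,ψ}_a u(r,·))(t) = P + ν · (∂²u/∂r²(r,t) + (1/r) · ∂u/∂r(r,t)). -/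
/-!
Differentiating `u r` in time gives `(P - 4ν) α (ψ - ψ a)^(α-1) ψ' / Γ(α+1)`. After the substitution
`x = ψ τ`, the Caputo integral becomes a multiple of `∫ x^(α-1) (c-x)^(-α)` over `[0, c]`,
`c = ψ t - ψ a`, which is `B(α, 1-α) = Γ(α) Γ(1-α)` independently of `c`. Hence the Caputo derivative
is `P - 4ν`, and the radial Laplacian of `1 - r²` is `-4`.
-/

open Real MeasureTheory intervalIntegral

/-- The ψ-Caputo fractional derivative of order `α` (with `0 < α < 1`)
with base point `a` of a function `f`. -/
noncomputable def psiCaputo (α a : ℝ) (ψ f : ℝ → ℝ) (t : ℝ) : ℝ :=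
  (1 / Real.Gamma (1 - α)) *
    ∫ τ in a..t, deriv ψ τ * (ψ t - ψ τ) ^ (-α) * (deriv f τ / deriv ψ τ)

/-- The Beta integral `B(α, 1-α)` over `[0, c]`; the exponents sum to `-1`, so it is independent
of `c`. -/
lemma integral_rpow_mul_rpow_sub (α c : ℝ) (hα₀ : 0 < α) (hα₁ : α < 1) (hc : 0 < c) :
    ∫ x in (0 : ℝ)..c, x ^ (α - 1) * (c - x) ^ (-α) = Real.Gamma α * Real.Gamma (1 - α) := by
  have h := Complex.betaIntegral_scaled (α : ℂ) ((1 - α : ℝ) : ℂ) hc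
  have hG := Complex.Gamma_mul_Gamma_eq_betaIntegral (s := (α : ℂ)) (t := ((1 - α : ℝ) : ℂ))
    (by simpa using hα₀) (by rw [Complex.ofReal_re]; linarith)
  have h1 : (α : ℂ) + ((1 - α : ℝ) : ℂ) = 1 := by push_cast; ring
  rw [h1] at h hG
  rw [Complex.Gamma_one, one_mul] at hG
  rw [sub_self, Complex.cpow_zero, one_mul, ← hG, Complex.Gamma_ofReal, Complex.Gamma_ofReal] at h
  have key : ∫ x in (0 : ℝ)..c, (x : ℂ) ^ ((α : ℂ) - 1) * ((c : ℂ) - x) ^ (((1 - α : ℝ) : ℂ) - 1)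
      = ∫ x in (0 : ℝ)..c, ((x ^ (α - 1) * (c - x) ^ (-α) : ℝ) : ℂ) := by
    refine integral_congr fun x hx => ?_
    rw [Set.uIcc_of_le hc.le] at hx
    have e1 : (α : ℂ) - 1 = ((α - 1 : ℝ) : ℂ) := by push_cast; ring
    have e2 : ((1 - α : ℝ) : ℂ) - 1 = ((-α : ℝ) : ℂ) := by push_cast; ring
    simp only [e1, e2]
    rw [← Complex.ofReal_sub, ← Complex.ofReal_cpow hx.1,
      ← Complex.ofReal_cpow (sub_nonneg.2 hx.2), ← Complex.ofReal_mul]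
  rw [key, intervalIntegral.integral_ofReal] at h
  exact_mod_cast h

theorem exact_solution_NS_cylindrical (α ν P a b : ℝ) (hα₀ : 0 < α) (hα₁ : α < 1)
    (hab : a < b)
    (ψ : ℝ → ℝ) (hψC1 : ContDiffOn ℝ 1 ψ (Set.Icc a b))
    (hψmono : StrictMonoOn ψ (Set.Icc a b))
    (hψ' : ∀ x ∈ Set.Icc a b, 0 < deriv ψ x)
    (u : ℝ → ℝ → ℝ)
    (hu : ∀ r t, u r t = 1 - r ^ 2 + (P - 4 * ν) * (ψ t - ψ a) ^ α / Real.Gamma (α + 1)) :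
    (∀ r, u r a = 1 - r ^ 2) ∧
    ∀ r ≠ 0, ∀ t ∈ Set.Ioc a b,
      psiCaputo α a ψ (fun s => u r s) t =
        P + ν * (deriv (deriv (fun r' => u r' t)) r
          + (1 / r) * deriv (fun r' => u r' t) r) := by
  refine ⟨fun r => by rw [hu, sub_self, Real.zero_rpow hα₀.ne']; simp, ?_⟩
  rintro r hr t ⟨hat, htb⟩
  have hderiv : deriv (fun r' => u r' t) = fun r' => -2 * r' := by
    funext x
    simp only [hu]
    have h := ((hasDerivAt_pow 2 x).const_sub 1).add_const
      ((P - 4 * ν) * (ψ t - ψ a) ^ α / Real.Gamma (α + 1))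
    rw [h.deriv]
    norm_num
  have hderiv2 : deriv (fun r' : ℝ => -2 * r') r = -2 := by
    simp
  rw [hderiv, hderiv2]
  have hR : P + ν * (-2 + 1 / r * (-2 * r)) = P - 4 * ν := by field_simp; ring
  rw [hR]
  have hta : Set.Icc a t ⊆ Set.Icc a b := Set.Icc_subset_Icc_right htb
  have hc : 0 < ψ t - ψ a :=
    sub_pos.2 (hψmono (Set.left_mem_Icc.2 hab.le) ⟨hat.le, htb⟩ hat)
  -- A nonzero `deriv` gives two-sided differentiability, at the endpoints as well.
  have hd : ∀ x ∈ Set.Icc a b, HasDerivAt ψ (deriv ψ x) x := fun x hx =>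
    (differentiableAt_of_deriv_ne_zero (hψ' x hx).ne').hasDerivAt
  set g : ℝ → ℝ := fun x => (x - ψ a) ^ (α - 1) * (ψ t - x) ^ (-α) with hg
  have hint : ∫ τ in a..t, deriv ψ τ * (ψ t - ψ τ) ^ (-α) *
        (deriv (fun s => u r s) τ / deriv ψ τ) =
      ∫ τ in a..t, (P - 4 * ν) / Real.Gamma α * ((g ∘ ψ) τ * deriv ψ τ) := by
    refine intervalIntegral.integral_congr_ae (Filter.Eventually.of_forall fun τ hτ => ?_)
    rw [Set.uIoc_of_le hat.le] at hτ
    have hτb : τ ∈ Set.Icc a b := ⟨hτ.1.le, hτ.2.trans htb⟩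
    have hpos : 0 < ψ τ - ψ a := sub_pos.2 (hψmono (Set.left_mem_Icc.2 hab.le) hτb hτ.1)
    have hdu : deriv (fun s => u r s) τ =
        (P - 4 * ν) * (deriv ψ τ * α * (ψ τ - ψ a) ^ (α - 1)) / Real.Gamma (α + 1) := by
      simp only [hu]
      exact ((((((hd τ hτb).sub_const (ψ a)).rpow_const (Or.inl hpos.ne')).const_mul
        (P - 4 * ν)).div_const _).const_add _).deriv
    rw [hdu, Real.Gamma_add_one hα₀.ne']
    have := (hψ' τ hτb).ne'
    have := (Real.Gamma_pos_of_pos hα₀).ne'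
    simp only [hg, Function.comp]
    field_simp
  have hsub : ∫ τ in a..t, (g ∘ ψ) τ * deriv ψ τ = ∫ x in ψ a..ψ t, g x := by
    refine integral_comp_mul_deriv_of_deriv_nonneg ?_ ?_ ?_
    · rw [Set.uIcc_of_le hat.le]
      exact hψC1.continuousOn.mono hta
    · intro x hx
      rw [min_eq_left hat.le, max_eq_right hat.le] at hx
      exact hd x (hta (Set.Ioo_subset_Icc_self hx))
    · intro x hx
      rw [min_eq_left hat.le, max_eq_right hat.le] at hx
      exact (hψ' x (hta (Set.Ioo_subset_Icc_self hx))).le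
  have hbeta : ∫ x in ψ a..ψ t, g x = Real.Gamma α * Real.Gamma (1 - α) := by
    rw [← integral_rpow_mul_rpow_sub α _ hα₀ hα₁ hc]
    have h := integral_comp_sub_right (a := ψ a) (b := ψ t)
      (fun y => y ^ (α - 1) * (ψ t - ψ a - y) ^ (-α)) (ψ a)
    rw [sub_self] at h
    rw [← h]
    simp only [hg, sub_sub_sub_cancel_right]
  rw [psiCaputo, hint, intervalIntegral.integral_const_mul, hsub, hbeta]
  have := (Real.Gamma_pos_of_pos hα₀).ne'
  have := (Real.Gamma_pos_of_pos (sub_pos.2 hα₁)).ne'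
  field_simp
end

section
/- Let 0 < α < 1, let ν, P, ħ ∈ ℝ with ħ ≠ 0, let a < b be reals and let ψ : [a,b] → ℝ be continuously differentiable, strictly increasing with ψ' > 0. Define the sequence of functions u_m(r,t) by: u_0(r,t) = 1 − r², and for m ≥ 1, u_m(r,t) = (χ_m + ħ)·u_{m−1}(r,t) − (χ_m + ħ)·u_{m−1}(r,a) − ħ · I^{α,ψ}_a[ ν(∂²u_{m−1}/∂r²(r,·) + (1/r)∂u_{m−1}/∂r(r,·)) + P(1 − χ_m) ](t), where χ_1 = 0 and χ_m = 1 for m ≥ 2. Then for every m ≥ 1, every r ≠ 0 and every t ∈ [a,b]: u_m(r,t) = −(1 + ħ)^{m−1} · ħ · (P − 4ν) · (ψ(t) − ψ(a))^α / Γ(α+1). -/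
/-!
The function `τ ↦ -(ψ t - ψ τ) ^ α / α` is a primitive of the kernel `ψ' τ (ψ t - ψ τ) ^ (α - 1)`,
so the ψ-fractional integral of a constant `c` is `c (ψ t - ψ a) ^ α / Γ(α + 1)`
(`psiFracInt_of_eqOn_const`). The cylindrical Laplacian of `u₀ = 1 - r²` is the constant `-4` away
from `r = 0`, which gives `u₁`. Every later iterate is constant in `r` on `r ≠ 0` and vanishes at
`t = a`, so its Laplacian is zero and each further step only multiplies by `1 + ℏ`.
-/

open Real MeasureTheory intervalIntegral

/-- The ψ-fractional integral of order `α` with base point `a` of a function `f`. -/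
noncomputable def psiFracInt (α a : ℝ) (ψ f : ℝ → ℝ) (t : ℝ) : ℝ :=
  (1 / Real.Gamma α) * ∫ τ in a..t, deriv ψ τ * (ψ t - ψ τ) ^ (α - 1) * f τ

/-- The indicator `χ_m`: `χ_m = 0` for `m ≤ 1` and `χ_m = 1` for `m > 1`. -/
noncomputable def chiHAM (m : ℕ) : ℝ := if m ≤ 1 then 0 else 1

/-- The HAM iteration for the time-fractional Navier–Stokes equation in cylindrical
coordinates with initial guess `u₀(r,t) = 1 - r²`. -/
noncomputable def hamNS (α a ν P ℏ : ℝ) (ψ : ℝ → ℝ) : ℕ → ℝ → ℝ → ℝ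
  | 0 => fun r _ => 1 - r ^ 2
  | m + 1 => fun r t =>
      (chiHAM (m + 1) + ℏ) * hamNS α a ν P ℏ ψ m r t
      - (chiHAM (m + 1) + ℏ) * hamNS α a ν P ℏ ψ m r a
      - ℏ * psiFracInt α a ψ (fun τ =>
          ν * (deriv (deriv (fun r' => hamNS α a ν P ℏ ψ m r' τ)) r
            + (1 / r) * deriv (fun r' => hamNS α a ν P ℏ ψ m r' τ) r)
          + P * (1 - chiHAM (m + 1))) t

/-- The kernel has an integrable singularity at `τ = t`; integrability follows from its being the
nonnegative derivative of a function continuous up to the endpoint. -/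
lemma integral_psi_kernel {α a b t : ℝ} (hα₀ : 0 < α) {ψ : ℝ → ℝ}
    (hψmono : StrictMonoOn ψ (Set.Icc a b))
    (hψ' : ∀ x ∈ Set.Icc a b, 0 < deriv ψ x) (ht : t ∈ Set.Icc a b) :
    ∫ τ in a..t, deriv ψ τ * (ψ t - ψ τ) ^ (α - 1) = (ψ t - ψ a) ^ α / α := by
  have hsub : ∀ x ∈ Set.Icc a t, x ∈ Set.Icc a b := fun x hx => ⟨hx.1, hx.2.trans ht.2⟩
  -- A nonzero value of `deriv` forces differentiability.
  have hdiff : ∀ x ∈ Set.Icc a t, DifferentiableAt ℝ ψ x := fun x hx =>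
    differentiableAt_of_deriv_ne_zero (hψ' x (hsub x hx)).ne'
  have hpos : ∀ x ∈ Set.Ioo a t, 0 < ψ t - ψ x := fun x hx =>
    sub_pos.2 (hψmono (hsub x (Set.Ioo_subset_Icc_self hx)) ht hx.2)
  have hcont : ContinuousOn (fun τ => -((ψ t - ψ τ) ^ α / α)) (Set.Icc a t) := by
    have hψc : ContinuousOn ψ (Set.Icc a t) := fun x hx =>
      (hdiff x hx).continuousAt.continuousWithinAt
    exact (((continuousOn_const.sub hψc).rpow_const fun _ _ => Or.inr hα₀.le).div_const α).neg
  have hderiv : ∀ x ∈ Set.Ioo a t, HasDerivAt (fun τ => -((ψ t - ψ τ) ^ α / α))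
      (deriv ψ x * (ψ t - ψ x) ^ (α - 1)) x := by
    intro x hx
    have h := (((hdiff x (Set.Ioo_subset_Icc_self hx)).hasDerivAt.const_sub (ψ t)).rpow_const
      (p := α) (Or.inl (hpos x hx).ne')).div_const α |>.neg
    have he : -(-deriv ψ x * α * (ψ t - ψ x) ^ (α - 1) / α)
        = deriv ψ x * (ψ t - ψ x) ^ (α - 1) := by
      field_simp
    exact he ▸ h
  have hint : IntervalIntegrable (fun τ => deriv ψ τ * (ψ t - ψ τ) ^ (α - 1)) volume a t := by
    apply intervalIntegrable_deriv_of_nonneg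
      (g := fun τ => -((ψ t - ψ τ) ^ α / α))
    · rwa [Set.uIcc_of_le ht.1]
    · simpa [ht.1] using hderiv
    · intro x hx
      simp only [min_eq_left ht.1, max_eq_right ht.1] at hx
      exact mul_nonneg (hψ' x (hsub x (Set.Ioo_subset_Icc_self hx))).le
        (Real.rpow_nonneg (hpos x hx).le _)
  rw [integral_eq_sub_of_hasDerivAt_of_le ht.1 hcont hderiv hint]
  simp [Real.zero_rpow hα₀.ne']

lemma psiFracInt_of_eqOn_const {α a b t c : ℝ} (hα₀ : 0 < α) {ψ f : ℝ → ℝ}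
    (hψmono : StrictMonoOn ψ (Set.Icc a b))
    (hψ' : ∀ x ∈ Set.Icc a b, 0 < deriv ψ x) (ht : t ∈ Set.Icc a b)
    (hf : ∀ τ ∈ Set.Icc a b, f τ = c) :
    psiFracInt α a ψ f t = c * (ψ t - ψ a) ^ α / Real.Gamma (α + 1) := by
  have h : ∫ τ in a..t, deriv ψ τ * (ψ t - ψ τ) ^ (α - 1) * f τ
      = ∫ τ in a..t, deriv ψ τ * (ψ t - ψ τ) ^ (α - 1) * c := by
    refine integral_congr fun τ hτ => ?_
    rw [Set.uIcc_of_le ht.1] at hτ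
    simp only [hf τ ⟨hτ.1, hτ.2.trans ht.2⟩]
  have hΓ := (Real.Gamma_pos_of_pos hα₀).ne'
  rw [psiFracInt, h, intervalIntegral.integral_mul_const,
    integral_psi_kernel hα₀ hψmono hψ' ht, Real.Gamma_add_one hα₀.ne']
  field_simp

/-- A function constant on the punctured line has zero first and second derivatives there; its
value at `0` is irrelevant. -/
lemma deriv_eq_zero_of_const_off_zero {g : ℝ → ℝ} {c : ℝ} (hg : ∀ r, r ≠ 0 → g r = c)
    {r : ℝ} (hr : r ≠ 0) : deriv g r = 0 ∧ deriv (deriv g) r = 0 := by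
  have key : ∀ (k : ℝ → ℝ) (d : ℝ), (∀ s, s ≠ 0 → k s = d) → ∀ s, s ≠ 0 → deriv k s = 0 := by
    intro k d hk s hs
    have : k =ᶠ[nhds s] fun _ => d := by
      filter_upwards [isOpen_ne.mem_nhds hs] with x hx using hk x hx
    rw [this.deriv_eq, deriv_const]
  exact ⟨key g c hg r hr, key _ 0 (key g c hg) r hr⟩

theorem hamNS_closed_form (α ν P ℏ a b : ℝ) (hα₀ : 0 < α) (hα₁ : α < 1) (hℏ : ℏ ≠ 0)
    (hab : a < b)
    (ψ : ℝ → ℝ) (hψC1 : ContDiffOn ℝ 1 ψ (Set.Icc a b))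
    (hψmono : StrictMonoOn ψ (Set.Icc a b))
    (hψ' : ∀ x ∈ Set.Icc a b, 0 < deriv ψ x) :
    ∀ m : ℕ, 1 ≤ m → ∀ r : ℝ, r ≠ 0 → ∀ t ∈ Set.Icc a b,
      hamNS α a ν P ℏ ψ m r t =
        -(1 + ℏ) ^ (m - 1) * ℏ * (P - 4 * ν) * (ψ t - ψ a) ^ α / Real.Gamma (α + 1) := by
  intro m hm
  induction m, hm using Nat.le_induction with
  | base =>
    intro r hr t ht
    have hd : deriv (fun r' : ℝ => 1 - r' ^ 2) = fun r' => -2 * r' := by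
      funext x
      simp
    have hdd : deriv (fun r' : ℝ => -2 * r') r = -2 := by
      simp
    have hI := psiFracInt_of_eqOn_const (c := P - 4 * ν) hα₀ hψmono hψ' ht
      (f := fun τ => ν * (deriv (deriv (fun r' => hamNS α a ν P ℏ ψ 0 r' τ)) r
        + (1 / r) * deriv (fun r' => hamNS α a ν P ℏ ψ 0 r' τ) r)
        + P * (1 - chiHAM (0 + 1))) (by
      intro τ _
      simp only [hamNS, hd, hdd, chiHAM]
      simp
      field_simp
      ring)
    change _ - _ - ℏ * psiFracInt α a ψ _ t = _
    rw [hI]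
    simp only [hamNS]
    simp
    ring
  | succ m hm ih =>
    intro r hr t ht
    have hchi : chiHAM (m + 1) = 1 := by
      rw [chiHAM, if_neg (by omega)]
    have hI := psiFracInt_of_eqOn_const (c := 0) hα₀ hψmono hψ' ht
      (f := fun τ => ν * (deriv (deriv (fun r' => hamNS α a ν P ℏ ψ m r' τ)) r
        + (1 / r) * deriv (fun r' => hamNS α a ν P ℏ ψ m r' τ) r)
        + P * (1 - chiHAM (m + 1))) (by
      intro τ hτ
      obtain ⟨h1, h2⟩ := deriv_eq_zero_of_const_off_zero
        (g := fun r' => hamNS α a ν P ℏ ψ m r' τ) (fun s hs => ih s hs τ hτ) hr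
      simp only [h1, h2, hchi]
      ring)
    change _ - _ - ℏ * psiFracInt α a ψ _ t = _
    rw [hI, ih r hr t ht, ih r hr a ⟨le_rfl, hab.le⟩, hchi, sub_self, Real.zero_rpow hα₀.ne']
    obtain ⟨k, rfl⟩ := Nat.exists_eq_add_of_le' hm
    simp only [Nat.add_sub_cancel]
    ring
end

section
/- Let 0 < α < 1, let a < b be reals and let ψ : [a,b] → ℝ be continuously differentiable, strictly increasing with ψ' > 0. Define the coefficients c_k by c_1 = 1 and c_{k+1} = (2k−1)² · c_k for k ≥ 1, and define the terms T_0(r,t) = r and, for k ≥ 1, T_k(r,t) = c_k · r^{1−2k} · (ψ(t) − ψ(a))^{kα} / Γ(kα + 1). Then for every k ≥ 1, every r ≠ 0 and every t ∈ (a,b]: (i) T_k(r,a) = 0; (ii) (ᶜD^{α,ψ}_a T_k(r,·))(t) = ∂²T_{k−1}/∂r²(r,t) + (1/r)·∂T_{k−1}/∂r(r,t). Consequently the series r + Σ_{k=1}^∞ T_k(r,t) formally satisfies the time-fractional Navier–Stokes equation ᶜD^{α,ψ}_a u = ∂²u/∂r² + (1/r)∂u/∂r term by term, with initial condition u(r,a)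 = r. -/
/-!
Both sides of the equation are explicit. By the substitution `u = ψ τ - ψ a` (legitimate because
`ψ` is increasing) the ψ-Caputo derivative of `(ψ - ψ a) ^ β` becomes a scaled Beta integral, so it
equals `Γ(β + 1) / Γ(β + 1 - α) * (ψ t - ψ a) ^ (β - α)` (`psiCaputo_const_mul_rpow`). With
`β = kα` this turns the factor `(ψ - ψ a) ^ (kα) / Γ(kα + 1)` of `T_k` into that of `T_{k-1}`.
On the other side, the radial operator `∂² + r⁻¹ ∂` sends `r ^ m` to `m² r ^ (m - 2)`
(`radial_const_mul_zpow`), and for `m = 1 - 2(k - 1)` the factor `m²` is exactly the ratio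
`c_k / c_{k-1}`.
-/

open Real MeasureTheory intervalIntegral

/-- The coefficients `c₁ = 1`, `c_{k+1} = (2k-1)² * c_k` for `k ≥ 1`
(so `c_k = 1²·3²·⋯·(2k-3)²` for `k ≥ 2`). -/
noncomputable def nsCoeff : ℕ → ℝ
  | 0 => 1
  | 1 => 1
  | k + 2 => (2 * ((k : ℝ) + 1) - 1) ^ 2 * nsCoeff (k + 1)

/-- The terms of the series solution: `T₀(r,t) = r` and, for `k ≥ 1`,
`T_k(r,t) = c_k · r^(1-2k) · (ψ(t)-ψ(a))^(kα) / Γ(kα+1)`. -/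
noncomputable def nsTerm (α a : ℝ) (ψ : ℝ → ℝ) : ℕ → ℝ → ℝ → ℝ
  | 0 => fun r _ => r
  | k + 1 => fun r t =>
      nsCoeff (k + 1) * r ^ (1 - 2 * ((k : ℤ) + 1)) *
        (ψ t - ψ a) ^ (((k : ℝ) + 1) * α) / Real.Gamma (((k : ℝ) + 1) * α + 1)

/-- The Beta integral scaled to `[0, x]`, over the reals. -/
lemma integral_rpow_mul_rpow_sub_s7 {p q x : ℝ} (hp : 0 < p) (hq : 0 < q) (hx : 0 < x) :
    ∫ s in (0 : ℝ)..x, s ^ (p - 1) * (x - s) ^ (q - 1) =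
      x ^ (p + q - 1) * (Real.Gamma p * Real.Gamma q / Real.Gamma (p + q)) := by
  have h := Complex.betaIntegral_scaled (p : ℂ) (q : ℂ) hx
  rw [Complex.betaIntegral_eq_Gamma_mul_div _ _ (by simpa using hp) (by simpa using hq)] at h
  have hcongr : ∫ s in (0 : ℝ)..x, (s : ℂ) ^ ((p : ℂ) - 1) * ((x : ℂ) - s) ^ ((q : ℂ) - 1) =
      ∫ s in (0 : ℝ)..x, ((s ^ (p - 1) * (x - s) ^ (q - 1) : ℝ) : ℂ) := by
    refine intervalIntegral.integral_congr fun s hs => ?_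
    rw [Set.uIcc_of_le hx.le] at hs
    rw [Complex.ofReal_mul, Complex.ofReal_cpow hs.1, Complex.ofReal_cpow (sub_nonneg.2 hs.2)]
    push_cast
    rfl
  rw [hcongr, intervalIntegral.integral_ofReal, ← Complex.ofReal_add, Complex.Gamma_ofReal,
    Complex.Gamma_ofReal, Complex.Gamma_ofReal, ← Complex.ofReal_one, ← Complex.ofReal_sub,
    ← Complex.ofReal_cpow hx.le] at h
  exact_mod_cast h

/-- The ψ-Caputo derivative of a power of `ψ - ψ a`. -/
lemma psiCaputo_const_mul_rpow {α a b : ℝ} (hα₁ : α < 1)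
    {ψ : ℝ → ℝ} (hψmono : StrictMonoOn ψ (Set.Icc a b))
    (hψ' : ∀ x ∈ Set.Icc a b, 0 < deriv ψ x) {β : ℝ} (hβ : 0 < β) (C : ℝ)
    {t : ℝ} (ht : t ∈ Set.Ioc a b) :
    psiCaputo α a ψ (fun s => C * (ψ s - ψ a) ^ β) t =
      C * (Real.Gamma (β + 1) / Real.Gamma (β + 1 - α)) * (ψ t - ψ a) ^ (β - α) := by
  have hat : a < t := ht.1
  have haI : a ∈ Set.Icc a b := ⟨le_rfl, hat.le.trans ht.2⟩
  have htI : t ∈ Set.Icc a b := ⟨hat.le, ht.2⟩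
  have hlt : 0 < ψ t - ψ a := sub_pos.2 (hψmono haI htI hat)
  -- a nonzero value of `deriv` forces differentiability, also at the endpoints
  have hd : ∀ x ∈ Set.Icc a b, HasDerivAt ψ (deriv ψ x) x := fun x hx =>
    (differentiableAt_of_deriv_ne_zero (hψ' x hx).ne').hasDerivAt
  have hsub : Set.uIcc a t ⊆ Set.Icc a b := by
    rw [Set.uIcc_of_le hat.le]
    exact Set.Icc_subset_Icc_right ht.2
  have hsub' : Set.Ioo (min a t) (max a t) ⊆ Set.Icc a b :=
    Set.Ioo_subset_Icc_self.trans hsub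
  set x := ψ t - ψ a with hx
  have hsubst := intervalIntegral.integral_comp_mul_deriv_of_deriv_nonneg (a := a) (b := t)
    (f := fun τ => ψ τ - ψ a) (f' := deriv ψ)
    (g := fun u => C * β * (u ^ (β - 1) * (x - u) ^ ((1 - α) - 1)))
    (fun y hy => ((hd y (hsub hy)).continuousAt.sub continuousAt_const).continuousWithinAt)
    (fun y hy => (hd y (hsub' hy)).sub_const _)
    (fun y hy => (hψ' y (hsub' hy)).le)
  have hint : ∫ τ in a..t, deriv ψ τ * (ψ t - ψ τ) ^ (-α) *
        (deriv (fun s => C * (ψ s - ψ a) ^ β) τ / deriv ψ τ) =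
      ∫ τ in a..t, ((fun u => C * β * (u ^ (β - 1) * (x - u) ^ ((1 - α) - 1))) ∘
        fun τ => ψ τ - ψ a) τ * deriv ψ τ := by
    -- the integrands may differ at `τ = a`, where `(ψ - ψ a) ^ β` need not be differentiable
    refine intervalIntegral.integral_congr_ae (Filter.Eventually.of_forall fun τ hτ => ?_)
    rw [Set.uIoc_of_le hat.le] at hτ
    have hτI : τ ∈ Set.Icc a b := ⟨hτ.1.le, hτ.2.trans ht.2⟩
    have hpos : 0 < ψ τ - ψ a := sub_pos.2 (hψmono haI hτI hτ.1)
    have hder : deriv (fun s => C * (ψ s - ψ a) ^ β) τ =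
        C * (deriv ψ τ * β * (ψ τ - ψ a) ^ (β - 1)) :=
      ((((hd τ hτI).sub_const (ψ a)).rpow_const (Or.inl hpos.ne')).const_mul C).deriv
    have hne := (hψ' τ hτI).ne'
    have e1 : x - (ψ τ - ψ a) = ψ t - ψ τ := by rw [hx]; ring
    have e2 : 1 - α - 1 = -α := by ring
    simp only [Function.comp, hder, e1, e2]
    field_simp
  have hΓα : Real.Gamma (1 - α) ≠ 0 := (Real.Gamma_pos_of_pos (by linarith)).ne'
  unfold psiCaputo
  rw [hint, hsubst, sub_self, intervalIntegral.integral_const_mul,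
    integral_rpow_mul_rpow_sub_s7 hβ (by linarith) hlt, Real.Gamma_add_one hβ.ne',
    show β + (1 - α) - 1 = β - α by ring, show β + (1 - α) = β + 1 - α by ring]
  field_simp

lemma radial_const_mul_zpow (C : ℝ) (m : ℤ) {r : ℝ} (hr : r ≠ 0) :
    deriv (deriv fun s : ℝ => C * s ^ m) r + 1 / r * deriv (fun s : ℝ => C * s ^ m) r =
      C * (m : ℝ) ^ 2 * r ^ (m - 2) := by
  have h1 : deriv (fun s : ℝ => C * s ^ m) = fun s => C * (m * s ^ (m - 1)) := by
    funext s
    rw [deriv_const_mul_field, deriv_zpow]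
  have h2 : deriv (fun s : ℝ => C * (m * s ^ (m - 1))) r =
      C * (m * ((m - 1 : ℤ) * r ^ (m - 2))) := by
    rw [deriv_const_mul_field, deriv_const_mul_field, deriv_zpow, show m - 1 - 1 = m - 2 by ring]
  have h3 : r ^ (m - 1) = r ^ (m - 2) * r := by
    rw [← zpow_add_one₀ hr, show m - 2 + 1 = m - 1 by ring]
  rw [h1, h2]
  simp only [h3]
  push_cast
  field_simp
  ring

theorem nsTerm_termwise_equation (α a b : ℝ) (hα₀ : 0 < α) (hα₁ : α < 1) (hab : a < b)
    (ψ : ℝ → ℝ) (hψC1 : ContDiffOn ℝ 1 ψ (Set.Icc a b))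
    (hψmono : StrictMonoOn ψ (Set.Icc a b))
    (hψ' : ∀ x ∈ Set.Icc a b, 0 < deriv ψ x) :
    ∀ k : ℕ, 1 ≤ k → ∀ r : ℝ, r ≠ 0 → ∀ t ∈ Set.Ioc a b,
      nsTerm α a ψ k r a = 0 ∧
      psiCaputo α a ψ (fun s => nsTerm α a ψ k r s) t =
        deriv (deriv (fun r' => nsTerm α a ψ (k - 1) r' t)) r
          + (1 / r) * deriv (fun r' => nsTerm α a ψ (k - 1) r' t) r := by
  intro k hk r hr t ht
  obtain ⟨n, rfl⟩ : ∃ n, k = n + 1 := ⟨k - 1, by omega⟩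
  have hβ : 0 < ((n : ℝ) + 1) * α := by positivity
  refine ⟨by simp [nsTerm, Real.zero_rpow hβ.ne'], ?_⟩
  have hΓ : Real.Gamma (((n : ℝ) + 1) * α + 1) ≠ 0 := (Real.Gamma_pos_of_pos (by linarith)).ne'
  have hL : (fun s => nsTerm α a ψ (n + 1) r s) = fun s =>
      (nsCoeff (n + 1) * r ^ (1 - 2 * ((n : ℤ) + 1)) / Real.Gamma (((n : ℝ) + 1) * α + 1)) *
        (ψ s - ψ a) ^ (((n : ℝ) + 1) * α) := by
    funext s
    simp only [nsTerm]
    ring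
  rw [hL, psiCaputo_const_mul_rpow hα₁ hψmono hψ' hβ _ ht, Nat.add_sub_cancel,
    show ((n : ℝ) + 1) * α + 1 - α = n * α + 1 by ring,
    show ((n : ℝ) + 1) * α - α = n * α by ring]
  rcases n with _ | n
  · have hR : (fun r' => nsTerm α a ψ 0 r' t) = fun r' : ℝ => 1 * r' ^ (1 : ℤ) := by
      funext r'
      simp [nsTerm]
    rw [hR, radial_const_mul_zpow _ _ hr]
    simp only [Nat.cast_zero, zero_add, one_mul, zero_mul] at hΓ ⊢
    simp only [nsCoeff, Real.rpow_zero, Real.Gamma_one]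
    norm_num
    field_simp
  · have hR : (fun r' => nsTerm α a ψ (n + 1) r' t) = fun r' : ℝ =>
        (nsCoeff (n + 1) * (ψ t - ψ a) ^ (((n : ℝ) + 1) * α) /
          Real.Gamma (((n : ℝ) + 1) * α + 1)) * r' ^ (1 - 2 * ((n : ℤ) + 1)) := by
      funext r'
      simp only [nsTerm]
      ring
    have hexp : 1 - 2 * (((n + 1 : ℕ) : ℤ) + 1) = 1 - 2 * ((n : ℤ) + 1) - 2 := by
      push_cast
      ring
    rw [hR, radial_const_mul_zpow _ _ hr, hexp]
    push_cast at hΓ ⊢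
    rw [show nsCoeff (n + 1 + 1) = (2 * ((n : ℝ) + 1) - 1) ^ 2 * nsCoeff (n + 1) from rfl]
    field_simp
    ring
end

section
/- Let 0 < α < 1, let λ ∈ ℝ, let a < b be reals and let ψ : [a,b] → ℝ be continuously differentiable, strictly increasing with ψ' > 0. Define F(t) = E_α(λ·(ψ(t) − ψ(a))^α) = Σ_{m=0}^∞ λ^m (ψ(t) − ψ(a))^{mα} / Γ(mα + 1). Then for every t ∈ (a,b], (ᶜD^{α,ψ}_a F)(t) = λ · E_α(λ·(ψ(t) − ψ(a))^α). -/
/-!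
Write `u = ψ τ - ψ a` and `X = ψ t - ψ a`. By the chain rule, the integrand of the fractional
derivative is `ψ'(τ) (X - u)^(-α) G'(u)` with `G u = E_α(λ u^α)`, so the substitution `τ ↦ u`
(`integral_image_eq_integral_abs_deriv_smul`, valid with no integrability hypothesis) reduces the
claim to `∫₀^X (X - u)^(-α) G'(u) du = Γ(1 - α) λ E_α(λ X^α)`.

Termwise differentiation gives `G'(u) = ∑ λ^(m+1) u^((m+1)α - 1) / Γ((m+1)α)` for `u > 0`
(`hasDerivAt_mittagLeffler_rpow`), and each term is integrated against `(X - u)^(-α)` by the Beta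
integral (`integral_rpow_mul_rpow`), producing `Γ(1 - α) λ (λ X^α)^m / Γ(mα + 1)`.
All interchanges rest on the absolute convergence of the Mittag-Leffler series, which follows from
`Γ(s + 1) ≥ R^s e^(-R)` for every `R > 0` (`rpow_mul_exp_neg_le_Gamma`): choosing `R` large makes
`Γ(mα + 1)` outgrow any geometric sequence.
-/

open Real MeasureTheory intervalIntegral

/-- The (real) Mittag-Leffler function `E_α(x) = Σ_{m=0}^∞ x^m / Γ(mα+1)`. -/
noncomputable def mittagLeffler (α x : ℝ) : ℝ :=
  ∑' m : ℕ, x ^ m / Real.Gamma ((m : ℝ) * α + 1)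

/-- The part of Euler's integral over `(R, ∞)`, where `x ^ s ≥ R ^ s`, already gives this bound. -/
lemma rpow_mul_exp_neg_le_Gamma {R s : ℝ} (hR : 0 < R) (hs : 0 ≤ s) :
    R ^ s * Real.exp (-R) ≤ Real.Gamma (s + 1) := by
  have hint := Real.GammaIntegral_convergent (s := s + 1) (by linarith)
  rw [Real.Gamma_eq_integral (by linarith : 0 < s + 1), ← integral_exp_neg_Ioi R,
    ← MeasureTheory.integral_const_mul]
  calc ∫ x in Set.Ioi R, R ^ s * Real.exp (-x)
      ≤ ∫ x in Set.Ioi R, Real.exp (-x) * x ^ (s + 1 - 1) := by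
        refine setIntegral_mono_on ((integrableOn_exp_neg_Ioi R).const_mul _)
          (hint.mono_set (Set.Ioi_subset_Ioi hR.le)) measurableSet_Ioi fun x hx => ?_
        rw [add_sub_cancel_right, mul_comm]
        exact mul_le_mul_of_nonneg_left (Real.rpow_le_rpow hR.le (le_of_lt hx) hs)
          (Real.exp_pos _).le
    _ ≤ _ := by
        refine setIntegral_mono_set hint ?_ (Set.Ioi_subset_Ioi hR.le).eventuallyLE
        filter_upwards [ae_restrict_mem measurableSet_Ioi] with x hx
        have hx' : (0 : ℝ) < x := hx
        simp only [Pi.zero_apply]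
        positivity

lemma Gamma_mul_add_one_pos {α : ℝ} (hα : 0 < α) (m : ℕ) :
    0 < Real.Gamma ((m : ℝ) * α + 1) := Real.Gamma_pos_of_pos (by positivity)

lemma summable_mittagLeffler {α : ℝ} (hα : 0 < α) (x : ℝ) :
    Summable fun m : ℕ => x ^ m / Real.Gamma ((m : ℝ) * α + 1) := by
  -- `R` is chosen so that `R ^ α = 2 (|x| + 1)`, which makes the terms `O(2⁻ᵐ)`.
  set c : ℝ := 2 * (|x| + 1) with hc
  have hx0 := abs_nonneg x
  have hc0 : 0 < c := by positivity
  set R : ℝ := c ^ (1 / α) with hRdef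
  have hR : 0 < R := Real.rpow_pos_of_pos hc0 _
  have hRα : R ^ α = c := by
    rw [hRdef, ← Real.rpow_mul hc0.le, one_div_mul_cancel hα.ne', Real.rpow_one]
  refine Summable.of_norm_bounded (g := fun m : ℕ => Real.exp R * (1 / 2 : ℝ) ^ m)
    (summable_geometric_two.mul_left _) fun m => ?_
  have hG := rpow_mul_exp_neg_le_Gamma hR (s := (m : ℝ) * α) (by positivity)
  rw [mul_comm (m : ℝ) α, Real.rpow_mul hR.le, hRα, Real.rpow_natCast, mul_comm α] at hG
  have hGp := Gamma_mul_add_one_pos hα m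
  rw [norm_div, norm_pow, Real.norm_eq_abs, Real.norm_of_nonneg hGp.le, div_le_iff₀ hGp]
  calc |x| ^ m ≤ (c / 2) ^ m := by gcongr; rw [hc]; linarith
    _ = Real.exp R * (1 / 2) ^ m * (c ^ m * Real.exp (-R)) := by
        rw [Real.exp_neg, div_pow, one_div, inv_pow]
        field_simp
    _ ≤ _ := by gcongr

lemma hasDerivAt_mittagLeffler {α : ℝ} (hα : 0 < α) (z : ℝ) :
    HasDerivAt (mittagLeffler α)
      (∑' m : ℕ, ((m + 1 : ℕ) : ℝ) * z ^ m / Real.Gamma (((m + 1 : ℕ) : ℝ) * α + 1)) z := by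
  set r : ℝ := |z| + 1 with hr
  have hz0 := abs_nonneg z
  have hr1 : 1 ≤ r := by linarith
  have hbound : ∀ (m : ℕ) (y : ℝ), y ∈ Metric.ball (0 : ℝ) r →
      ‖(m : ℝ) * y ^ (m - 1) / Real.Gamma ((m : ℝ) * α + 1)‖ ≤
        (2 * r) ^ m / Real.Gamma ((m : ℝ) * α + 1) := by
    intro m y hy
    have hGp := Gamma_mul_add_one_pos hα m
    rw [mem_ball_zero_iff, Real.norm_eq_abs] at hy
    rw [norm_div, norm_mul, norm_pow, Real.norm_of_nonneg hGp.le, Real.norm_natCast,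
      Real.norm_eq_abs, mul_pow]
    have h1 : (m : ℝ) ≤ 2 ^ m := by exact_mod_cast Nat.lt_two_pow_self.le
    have h2 : |y| ^ (m - 1) ≤ r ^ m :=
      (pow_le_pow_left₀ (abs_nonneg y) hy.le _).trans (pow_le_pow_right₀ hr1 (Nat.sub_le m 1))
    gcongr
  have hzmem : z ∈ Metric.ball (0 : ℝ) r := by
    rw [mem_ball_zero_iff, Real.norm_eq_abs]; linarith
  have hsum := summable_mittagLeffler hα (2 * r)
  have key := hasDerivAt_tsum_of_isPreconnected
    (g := fun (m : ℕ) (y : ℝ) => y ^ m / Real.Gamma ((m : ℝ) * α + 1))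
    (g' := fun (m : ℕ) (y : ℝ) => (m : ℝ) * y ^ (m - 1) / Real.Gamma ((m : ℝ) * α + 1))
    hsum Metric.isOpen_ball (convex_ball (0 : ℝ) r).isPreconnected
    (fun m y _ => (hasDerivAt_pow m y).div_const _) hbound hzmem
    (summable_mittagLeffler hα z) hzmem
  rw [(Summable.of_norm_bounded hsum fun m => hbound m z hzmem).tsum_eq_zero_add] at key
  simpa [mittagLeffler] using! key

lemma hasDerivAt_mittagLeffler_rpow {α : ℝ} (hα : 0 < α) (lam : ℝ) {u : ℝ} (hu : 0 < u) :
    HasDerivAt (fun v => mittagLeffler α (lam * v ^ α))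
      (∑' m : ℕ, lam ^ (m + 1) / Real.Gamma (((m : ℝ) + 1) * α) *
        u ^ (((m : ℝ) + 1) * α - 1)) u := by
  have h := (hasDerivAt_mittagLeffler hα (lam * u ^ α)).comp u
    ((Real.hasDerivAt_rpow_const (p := α) (Or.inl hu.ne')).const_mul lam)
  rw [← tsum_mul_right] at h
  refine h.congr_deriv (tsum_congr fun m => ?_)
  have hmα : 0 < ((m : ℝ) + 1) * α := by positivity
  have hexp : u ^ (((m : ℝ) + 1) * α - 1) = (u ^ α) ^ m * u ^ (α - 1) := by
    rw [← Real.rpow_natCast, ← Real.rpow_mul hu.le, ← Real.rpow_add hu]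
    congr 1; ring
  have hGp := Real.Gamma_pos_of_pos hmα
  push_cast
  rw [Real.Gamma_add_one hmα.ne', hexp]
  field_simp
  ring

/-- Euler's Beta integral on `(0, X)`. -/
lemma integral_rpow_mul_rpow {X p q : ℝ} (hX : 0 < X) (hp : 0 < p) (hq : 0 < q) :
    ∫ u in Set.Ioo 0 X, u ^ (p - 1) * (X - u) ^ (q - 1) =
      X ^ (p + q - 1) * (Real.Gamma p * Real.Gamma q / Real.Gamma (p + q)) := by
  have h := Complex.betaIntegral_scaled (p : ℂ) (q : ℂ) hX
  have hG := Complex.Gamma_mul_Gamma_eq_betaIntegral (s := (p : ℂ)) (t := (q : ℂ))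
    (by simpa using hp) (by simpa using hq)
  have hGp : Real.Gamma (p + q) ≠ 0 := (Real.Gamma_pos_of_pos (by positivity)).ne'
  have hB' : Complex.betaIntegral p q =
      ((Real.Gamma p * Real.Gamma q / Real.Gamma (p + q) : ℝ) : ℂ) := by
    rw [← Complex.ofReal_add, Complex.Gamma_ofReal, Complex.Gamma_ofReal,
      Complex.Gamma_ofReal] at hG
    have hGp' : ((Real.Gamma (p + q) : ℝ) : ℂ) ≠ 0 := by exact_mod_cast hGp
    push_cast
    rw [eq_div_iff hGp', hG, mul_comm]
  rw [hB', intervalIntegral.integral_of_le hX.le, integral_Ioc_eq_integral_Ioo] at h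
  have hcongr : ∫ u in Set.Ioo 0 X, (u : ℂ) ^ ((p : ℂ) - 1) * ((X : ℂ) - u) ^ ((q : ℂ) - 1) =
      ∫ u in Set.Ioo 0 X, ((u ^ (p - 1) * (X - u) ^ (q - 1) : ℝ) : ℂ) := by
    refine setIntegral_congr_fun measurableSet_Ioo fun u hu => ?_
    have h1 : (0 : ℝ) ≤ u := hu.1.le
    have h2 : (0 : ℝ) ≤ X - u := by linarith [hu.2]
    push_cast [Complex.ofReal_cpow h1, Complex.ofReal_cpow h2]
    rfl
  rw [hcongr, integral_complex_ofReal] at h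
  have hr : (X : ℂ) ^ ((p : ℂ) + q - 1) = ((X ^ (p + q - 1) : ℝ) : ℂ) := by
    push_cast [Complex.ofReal_cpow hX.le]; rfl
  rw [hr] at h
  exact_mod_cast h

lemma integrableOn_rpow_mul_rpow {X p q : ℝ} (hX : 0 < X) (hp : 0 < p) (hq : 0 < q) :
    IntegrableOn (fun u : ℝ => u ^ (p - 1) * (X - u) ^ (q - 1)) (Set.Ioo 0 X) := by
  -- A non-integrable function would have integral `0`, but the Beta integral is positive.
  by_contra hcon
  have h := integral_rpow_mul_rpow hX hp hq
  rw [integral_undef hcon] at h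
  have h1 := Real.Gamma_pos_of_pos hp
  have h2 := Real.Gamma_pos_of_pos hq
  have h3 := Real.Gamma_pos_of_pos (add_pos hp hq)
  have : 0 < X ^ (p + q - 1) * (Real.Gamma p * Real.Gamma q / Real.Gamma (p + q)) := by
    positivity
  linarith

/-- The case `ψ = id`, `a = 0`, with the derivative of `u ↦ E_α(λ u ^ α)` written as a series. -/
lemma integral_kernel_mul_tsum {α : ℝ} (hα₀ : 0 < α) (hα₁ : α < 1) (lam : ℝ) {X : ℝ}
    (hX : 0 < X) :
    ∫ u in Set.Ioo 0 X, (X - u) ^ (-α) *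
      (∑' m : ℕ, lam ^ (m + 1) / Real.Gamma (((m : ℝ) + 1) * α) *
        u ^ (((m : ℝ) + 1) * α - 1)) =
      Real.Gamma (1 - α) * (lam * mittagLeffler α (lam * X ^ α)) := by
  have hq : 0 < 1 - α := by linarith
  have hqe : (1 - α) - 1 = -α := by ring
  set F : ℕ → ℝ → ℝ := fun m u => lam ^ (m + 1) / Real.Gamma (((m : ℝ) + 1) * α) *
    (u ^ (((m : ℝ) + 1) * α - 1) * (X - u) ^ ((1 - α) - 1)) with hF
  have hmα : ∀ m : ℕ, 0 < ((m : ℝ) + 1) * α := fun m => by positivity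
  have hFint : ∀ m, Integrable (F m) (volume.restrict (Set.Ioo 0 X)) := fun m =>
    (integrableOn_rpow_mul_rpow hX (hmα m) hq).const_mul _
  -- Stated for an arbitrary coefficient `μ`, to cover both `lam` and `|lam|`.
  have hval : ∀ (m : ℕ) (μ : ℝ), μ ^ (m + 1) / Real.Gamma (((m : ℝ) + 1) * α) *
      ∫ u in Set.Ioo 0 X, u ^ (((m : ℝ) + 1) * α - 1) * (X - u) ^ ((1 - α) - 1) =
      Real.Gamma (1 - α) * (μ * ((μ * X ^ α) ^ m / Real.Gamma ((m : ℝ) * α + 1))) := by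
    intro m μ
    have hGp := Real.Gamma_pos_of_pos (hmα m)
    have hGq := Gamma_mul_add_one_pos hα₀ m
    rw [integral_rpow_mul_rpow hX (hmα m) hq,
      show ((m : ℝ) + 1) * α + (1 - α) = (m : ℝ) * α + 1 by ring, add_sub_cancel_right,
      mul_comm (m : ℝ) α, Real.rpow_mul hX.le, Real.rpow_natCast, mul_comm α (m : ℝ), mul_pow]
    field_simp
    ring
  have hnorm : ∀ m, ∫ u in Set.Ioo 0 X, ‖F m u‖ =
      Real.Gamma (1 - α) *
        (|lam| * ((|lam| * X ^ α) ^ m / Real.Gamma ((m : ℝ) * α + 1))) := by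
    intro m
    rw [← hval m |lam|, ← MeasureTheory.integral_const_mul]
    refine setIntegral_congr_fun measurableSet_Ioo fun u hu => ?_
    have h1 : (0 : ℝ) ≤ u := hu.1.le
    have h2 : (0 : ℝ) ≤ X - u := by linarith [hu.2]
    have hGp := Real.Gamma_pos_of_pos (hmα m)
    simp only [hF]
    rw [norm_mul, norm_div, norm_pow, Real.norm_eq_abs lam, Real.norm_of_nonneg hGp.le,
      Real.norm_of_nonneg (by positivity)]
  have hsum : Summable fun m => ∫ u in Set.Ioo 0 X, ‖F m u‖ := by
    simp_rw [hnorm]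
    exact ((summable_mittagLeffler hα₀ _).mul_left _).mul_left _
  have hswap := integral_tsum_of_summable_integral_norm hFint hsum
  have hlhs : ∀ u : ℝ, (X - u) ^ (-α) *
      (∑' m : ℕ, lam ^ (m + 1) / Real.Gamma (((m : ℝ) + 1) * α) *
        u ^ (((m : ℝ) + 1) * α - 1)) = ∑' m, F m u := by
    intro u
    rw [← tsum_mul_left]
    refine tsum_congr fun m => ?_
    simp only [hF, hqe]
    ring
  simp_rw [hlhs]
  rw [← hswap, mittagLeffler, ← tsum_mul_left, ← tsum_mul_left]
  refine tsum_congr fun m => ?_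
  simp only [hF]
  rw [MeasureTheory.integral_const_mul, hval m lam]

theorem psiCaputo_mittagLeffler (α lam a b : ℝ) (hα₀ : 0 < α) (hα₁ : α < 1)
    (hab : a < b)
    (ψ : ℝ → ℝ) (hψC1 : ContDiffOn ℝ 1 ψ (Set.Icc a b))
    (hψmono : StrictMonoOn ψ (Set.Icc a b))
    (hψ' : ∀ x ∈ Set.Icc a b, 0 < deriv ψ x) :
    ∀ t ∈ Set.Ioc a b,
      psiCaputo α a ψ (fun s => mittagLeffler α (lam * (ψ s - ψ a) ^ α)) t =
        lam * mittagLeffler α (lam * (ψ t - ψ a) ^ α) := by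
  intro t ht
  have hmem : ∀ x ∈ Set.Icc a t, x ∈ Set.Icc a b := fun x hx => ⟨hx.1, hx.2.trans ht.2⟩
  have hta : t ∈ Set.Icc a t := ⟨ht.1.le, le_rfl⟩
  have haa : a ∈ Set.Icc a t := ⟨le_rfl, ht.1.le⟩
  have hX : 0 < ψ t - ψ a := sub_pos.2 (hψmono (hmem a haa) (hmem t hta) ht.1)
  -- `deriv ψ x ≠ 0` forces two-sided differentiability, at the endpoints too.
  have hder : ∀ x ∈ Set.Icc a t, HasDerivAt (fun s => ψ s - ψ a) (deriv ψ x) x := fun x hx =>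
    (differentiableAt_of_deriv_ne_zero (hψ' x (hmem x hx)).ne').hasDerivAt.sub_const _
  have hmono : StrictMonoOn (fun s => ψ s - ψ a) (Set.Icc a t) := fun x hx y hy hxy =>
    sub_lt_sub_right (hψmono (hmem x hx) (hmem y hy) hxy) _
  have himage : (fun s => ψ s - ψ a) '' Set.Ioo a t = Set.Ioo 0 (ψ t - ψ a) := by
    apply Set.Subset.antisymm
    · rintro _ ⟨x, hx, rfl⟩
      have hx' := Set.Ioo_subset_Icc_self hx
      have h1 := hmono haa hx' hx.1
      simp only [sub_self] at h1
      exact ⟨h1, hmono hx' hta hx.2⟩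
    · have h := intermediate_value_Ioo ht.1.le
        (fun x hx => (hder x hx).continuousAt.continuousWithinAt)
      simpa only [sub_self] using h
  have hsub := integral_image_eq_integral_abs_deriv_smul (s := Set.Ioo a t) measurableSet_Ioo
    (fun x hx => (hder x (Set.Ioo_subset_Icc_self hx)).hasDerivWithinAt)
    (hmono.injOn.mono Set.Ioo_subset_Icc_self)
    (fun u => (ψ t - ψ a - u) ^ (-α) *
      (∑' m : ℕ, lam ^ (m + 1) / Real.Gamma (((m : ℝ) + 1) * α) *
        u ^ (((m : ℝ) + 1) * α - 1)))
  rw [himage, integral_kernel_mul_tsum hα₀ hα₁ lam hX] at hsub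
  have hGp : 0 < Real.Gamma (1 - α) := Real.Gamma_pos_of_pos (by linarith)
  rw [psiCaputo, intervalIntegral.integral_of_le ht.1.le, integral_Ioc_eq_integral_Ioo,
    one_div, inv_mul_eq_iff_eq_mul₀ hGp.ne', hsub]
  refine setIntegral_congr_fun measurableSet_Ioo fun x hx => ?_
  have hx' := Set.Ioo_subset_Icc_self hx
  have hpos := hψ' x (hmem x hx')
  have hu : 0 < ψ x - ψ a := by
    have h1 := hmono haa hx' hx.1
    simpa only [sub_self] using h1
  have hF := (hasDerivAt_mittagLeffler_rpow hα₀ lam hu).comp x (hder x hx')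
  simp only [Function.comp_def] at hF
  simp only [hF.deriv, smul_eq_mul]
  rw [abs_of_pos hpos, mul_div_cancel_right₀ _ hpos.ne', mul_assoc, sub_sub_sub_cancel_right]
end
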